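/- Let Φ be a Young function and φ:(0,∞)→(0,∞) satisfying the doubling condition. Then there exists C>0 such that for any f in the Orlicz–Campanato space 𝓛^{(Φ,φ)}(ℝⁿ) and any two balls B(a,r) ⊂ B(b,s), |f_{B(a,r)} − f_{B(b,s)}| ≤ C (∫_r^{2s} Φ⁻¹(φ(t))/t dt) ‖f‖_{𝓛^{(Φ,φ)}}. -/

import Mathlib

open MeasureTheory Set Metric Filter NNReal ENNReal Topology

noncomputable section

/-- Generalized inverse in the sense of O'Neil. -/
def ginv (Φ : ℝ≥0∞ → ℝ≥0∞) (u : ℝ≥0∞) : ℝ≥0∞ :=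
  if u = ⊤ then ⊤ else sInf {t | u < Φ t}

/-- A Young function: increasing, convex, vanishing at 0, left continuous,
not identically zero nor identically infinite. -/
structure IsYoung (Φ : ℝ≥0∞ → ℝ≥0∞) : Prop where
  mono : Monotone Φ
  zero : Φ 0 = 0
  top : Φ ⊤ = ⊤
  conv : ∀ (x y : ℝ≥0∞) (a b : ℝ≥0), a + b = 1 →
    Φ ((a : ℝ≥0∞) * x + (b : ℝ≥0∞) * y) ≤ (a : ℝ≥0∞) * Φ x + (b : ℝ≥0∞) * Φ y
  lcont : ∀ t : ℝ≥0∞, t < sInf {s | Φ s = ⊤} →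
    Filter.Tendsto Φ (nhdsWithin t (Set.Iio t)) (nhds (Φ t))
  pos : ∃ t, 0 < t ∧ Φ t ≠ ⊤
  fin : ∃ t, t ≠ ⊤ ∧ Φ t ≠ 0

/-- `θ` is almost decreasing on `(0,∞)`. -/
def AlmostDecreasingOn (θ : ℝ → ℝ) : Prop :=
  ∃ C : ℝ, 0 < C ∧ ∀ r s : ℝ, 0 < r → r < s → θ s ≤ C * θ r

/-- `θ` is almost increasing on `(0,∞)`. -/
def AlmostIncreasingOn (θ : ℝ → ℝ) : Prop :=
  ∃ C : ℝ, 0 < C ∧ ∀ r s : ℝ, 0 < r → r < s → θ r ≤ C * θ s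

/-- The class `𝒢^dec`: positive, almost decreasing `φ` with `r ↦ φ(r) rⁿ` almost increasing. -/
def Gdec (n : ℕ) (φ : ℝ → ℝ) : Prop :=
  (∀ r : ℝ, 0 < r → 0 < φ r) ∧ AlmostDecreasingOn φ ∧
    AlmostIncreasingOn (fun r => φ r * r ^ n)

variable {n : ℕ}

/-- The Orlicz–Morrey "norm" of `f` on the ball `B(a,r)`. -/
def ballNorm (Φ : ℝ≥0∞ → ℝ≥0∞) (φ : ℝ → ℝ)
    (f : EuclideanSpace ℝ (Fin n) → ℝ) (a : EuclideanSpace ℝ (Fin n)) (r : ℝ) : ℝ≥0∞ :=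
  sInf {lam : ℝ≥0∞ | 0 < lam ∧
    (ENNReal.ofReal (φ r))⁻¹ * ((volume (ball a r))⁻¹ *
      ∫⁻ x in ball a r, Φ (ENNReal.ofReal |f x| / lam)) ≤ 1}

/-- The Orlicz–Morrey norm `‖f‖_{L^{(Φ,φ)}}`: supremum over all balls of `ballNorm`. -/
def omNorm (Φ : ℝ≥0∞ → ℝ≥0∞) (φ : ℝ → ℝ) (f : EuclideanSpace ℝ (Fin n) → ℝ) : ℝ≥0∞ :=
  ⨆ (a : EuclideanSpace ℝ (Fin n)) (r : ℝ) (_ : 0 < r), ballNorm Φ φ f a r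

/-- The Orlicz–Campanato norm `‖f‖_{𝓛^{(Φ,φ)}} = sup_B ‖f − f_B‖_{Φ,φ,B}`. -/
def campNorm (Φ : ℝ≥0∞ → ℝ≥0∞) (φ : ℝ → ℝ) (f : EuclideanSpace ℝ (Fin n) → ℝ) : ℝ≥0∞ :=
  ⨆ (a : EuclideanSpace ℝ (Fin n)) (r : ℝ) (_ : 0 < r),
    ballNorm Φ φ (fun x => f x - ⨍ y in ball a r, f y) a r

/-- `φ` satisfies the doubling condition on `(0,∞)`. -/
def DoublingOn (φ : ℝ → ℝ) : Prop :=
  ∃ C : ℝ, 0 < C ∧ ∀ r s : ℝ, 0 < r → 0 < s → 1/2 ≤ r / s → r / s ≤ 2 →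
    φ r / φ s ≤ C ∧ (1/C : ℝ) ≤ φ r / φ s

/-!
A Young function grows at least linearly past any point `T` with `u ≤ Φ T`. This turns a bound `u`
on the mean of `Φ(|g| / λ)` into the bound `2 Φ⁻¹(u) λ` on the mean of `|g|`, so enlarging a ball
by a bounded factor to radius `2R` moves the average of `f` by at most a constant times
`Φ⁻¹(φ(2R)) ‖f‖`. Doubling of `φ` passes to `Φ⁻¹ ∘ φ`, which bounds `Φ⁻¹(φ(2R))` by the integral of
`Φ⁻¹(φ(t)) / t` over the dyadic interval `(R, 2R]`. Pass from `B(a, r)` through `B(a, 2ᵐ r)`, where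
`2ᵐ r ≤ s < 2ᵐ⁺¹ r`, and `B(b, 2s)` to `B(b, s)`: the dyadic intervals of the first leg are disjoint
subsets of `(r, s]`, and each of the last two steps costs one integral over `(s, 2s]`.
-/

section Average

variable {α E : Type*} [MeasurableSpace α] {μ : Measure α}

lemma edist_average_le_laverage [NormedAddCommGroup E] [NormedSpace ℝ E] [CompleteSpace E]
    [IsFiniteMeasure μ] [NeZero μ] {f : α → E} (hf : Integrable f μ) (c : E) :
    edist (⨍ x, f x ∂μ) c ≤ ⨍⁻ x, edist (f x) c ∂μ := by
  have average_sub_const : (⨍ x, f x ∂μ) - c = ⨍ x, (f x - c) ∂μ := by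
    unfold average
    rw [integral_sub hf.to_average (integrable_const c), integral_const, probReal_univ, one_smul]
  simp only [edist_eq_enorm_sub]
  rw [average_sub_const]
  exact enorm_integral_le_lintegral_enorm _

lemma setLAverage_le_mul_setLAverage_of_subset {s t : Set α} {k : ℝ≥0∞} (ht : μ t ≠ ⊤)
    (hst : s ⊆ t) (hk : μ t ≤ k * μ s) (g : α → ℝ≥0∞) :
    ⨍⁻ x in s, g x ∂μ ≤ k * ⨍⁻ x in t, g x ∂μ := by
  rw [setLAverage_eq]
  refine ENNReal.div_le_of_le_mul ?_
  calc ∫⁻ x in s, g x ∂μ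
      ≤ ∫⁻ x in t, g x ∂μ := lintegral_mono_set hst
    _ = μ t * ⨍⁻ x in t, g x ∂μ := (measure_mul_setLAverage g ht).symm
    _ ≤ k * μ s * ⨍⁻ x in t, g x ∂μ := by gcongr
    _ = k * (⨍⁻ x in t, g x ∂μ) * μ s := by ring

end Average

section Ball

variable {E : Type*} [NormedAddCommGroup E] [NormedSpace ℝ E] {a b : E} {r s : ℝ}

lemma addHaar_ball_le_pow_mul [MeasurableSpace E] [BorelSpace E] [FiniteDimensional ℝ E]
    (μ : Measure E) [μ.IsAddHaarMeasure] (a b : E) {k : ℝ≥0} (hk : 0 < k) (h : s ≤ k * r) :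
    μ (ball b s) ≤ k ^ Module.finrank ℝ E * μ (ball a r) :=
  calc μ (ball b s)
      ≤ μ (ball b (k * r)) := measure_mono (ball_subset_ball h)
    _ = k ^ Module.finrank ℝ E * μ (ball a r) := by
      rw [Measure.addHaar_ball_mul_of_pos μ b (mod_cast hk), ← Measure.addHaar_ball_center μ a,
        ENNReal.ofReal_pow k.coe_nonneg, ENNReal.ofReal_coe_nnreal]

lemma le_of_ball_subset_ball [Nontrivial E] (hr : 0 < r) (h : ball a r ⊆ ball b s) : r ≤ s := by
  have hs : 0 < s := pos_of_mem_ball (h (mem_ball_self hr))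
  have diam_le : diam (ball a r) ≤ diam (ball b s) := diam_mono h isBounded_ball
  rw [diam_ball_eq a hr.le, diam_ball_eq b hs.le] at diam_le
  linarith

end Ball

section Young

variable {Φ : ℝ≥0∞ → ℝ≥0∞} {c : ℝ≥0} {u v t T : ℝ≥0∞}

lemma ginv_of_ne_top (hu : u ≠ ⊤) : ginv Φ u = sInf {t | u < Φ t} := if_neg hu

namespace IsYoung

lemma mul_map_le_map_mul (hΦ : IsYoung Φ) (hc : 1 ≤ c) (t : ℝ≥0∞) : c * Φ t ≤ Φ (c * t) := by
  have hc0 : c ≠ 0 := (one_pos.trans_le hc).ne'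
  have hc0' : (c : ℝ≥0∞) ≠ 0 := mod_cast hc0
  have convex := hΦ.conv (c * t) 0 c⁻¹ (1 - c⁻¹)
    (add_tsub_cancel_of_le (inv_le_one_of_one_le₀ hc))
  rw [hΦ.zero, mul_zero, add_zero, add_zero, ENNReal.coe_inv hc0,
    ENNReal.inv_mul_cancel_left hc0' ENNReal.coe_ne_top] at convex
  rwa [mul_comm, ← ENNReal.le_div_iff_mul_le (.inl hc0') (.inl ENNReal.coe_ne_top),
    ENNReal.div_eq_inv_mul]

lemma ginv_ne_top (hΦ : IsYoung Φ) (hu : u ≠ ⊤) : ginv Φ u ≠ ⊤ := by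
  obtain ⟨t, ht, hΦt⟩ := hΦ.fin
  obtain ⟨k, hk⟩ := ENNReal.exists_nat_mul_gt hΦt hu
  have lt_map : u < Φ ((k + 1 : ℝ≥0) * t) :=
    calc u < k * Φ t := hk
      _ ≤ (k + 1 : ℝ≥0) * Φ t := by gcongr; push_cast; exact le_self_add
      _ ≤ Φ ((k + 1 : ℝ≥0) * t) := hΦ.mul_map_le_map_mul (by simp) t
  rw [ginv_of_ne_top hu]
  exact ne_top_of_le_ne_top (ENNReal.mul_ne_top ENNReal.coe_ne_top ht) (sInf_le lt_map)

lemma ginv_le_mul_ginv (hΦ : IsYoung Φ) (hc : 1 ≤ c) (hu : u ≠ ⊤) (h : v ≤ c * u) :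
    ginv Φ v ≤ c * ginv Φ u := by
  have hc0 : (c : ℝ≥0∞) ≠ 0 := mod_cast (one_pos.trans_le hc).ne'
  have hv : v ≠ ⊤ := ne_top_of_le_ne_top (ENNReal.mul_ne_top ENNReal.coe_ne_top hu) h
  rw [ginv_of_ne_top hu, ginv_of_ne_top hv, ← ENNReal.div_le_iff' hc0 ENNReal.coe_ne_top]
  refine le_sInf fun t ht => ENNReal.div_le_of_le_mul' (sInf_le ?_)
  calc v ≤ c * u := h
    _ < c * Φ t := ENNReal.mul_lt_mul_right hc0 ENNReal.coe_ne_top ht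
    _ ≤ Φ (c * t) := hΦ.mul_map_le_map_mul hc t

lemma mul_le_mul_map_of_le (hΦ : IsYoung Φ) (hu : u ≤ Φ T) (hTt : T ≤ t) (ht : t ≠ ⊤) :
    u * t ≤ T * Φ t := by
  lift t to ℝ≥0 using ht
  lift T to ℝ≥0 using ne_top_of_le_ne_top ENNReal.coe_ne_top hTt
  rcases eq_or_ne T 0 with rfl | hT
  · simp_all [hΦ.zero]
  have one_le : 1 ≤ t / T := (one_le_div (pos_iff_ne_zero.2 hT)).2 (mod_cast hTt)
  have hmul : T * (t / T) = t := mul_div_cancel₀ t hT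
  calc u * t = T * ((t / T : ℝ≥0) * u) := by
        rw [← mul_assoc, ← ENNReal.coe_mul, hmul, mul_comm]
    _ ≤ T * ((t / T : ℝ≥0) * Φ T) := by gcongr
    _ ≤ T * Φ ((t / T : ℝ≥0) * T) := by gcongr; exact hΦ.mul_map_le_map_mul one_le T
    _ = T * Φ t := by rw [← ENNReal.coe_mul, mul_comm (t / T), hmul]

lemma mul_le_mul_add_map (hΦ : IsYoung Φ) (hu : u ≤ Φ T) (ht : t ≠ ⊤) :
    u * t ≤ T * (u + Φ t) := by
  rcases le_total t T with htT | hTt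
  · calc u * t ≤ T * u := by rw [mul_comm]; gcongr
      _ ≤ T * (u + Φ t) := by gcongr; exact le_self_add
  · calc u * t ≤ T * Φ t := hΦ.mul_le_mul_map_of_le hu hTt ht
      _ ≤ T * (u + Φ t) := by gcongr; exact le_add_self

variable {α : Type*} [MeasurableSpace α] {μ : Measure α} [IsZeroOrProbabilityMeasure μ]
  {g : α → ℝ≥0∞}

lemma lintegral_le_two_mul_of_le_map (hΦ : IsYoung Φ) (hu0 : u ≠ 0) (hu : u ≠ ⊤)
    (hg : ∀ x, g x ≠ ⊤) (hmean : ∫⁻ x, Φ (g x) ∂μ ≤ u) (hT : u ≤ Φ T) :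
    ∫⁻ x, g x ∂μ ≤ 2 * T := by
  rcases eq_or_ne T ⊤ with rfl | hT_top
  · simp
  refine (ENNReal.mul_le_mul_iff_right hu0 hu).1 ?_
  calc u * ∫⁻ x, g x ∂μ
      = ∫⁻ x, u * g x ∂μ := (lintegral_const_mul' _ _ hu).symm
    _ ≤ ∫⁻ x, T * (u + Φ (g x)) ∂μ := lintegral_mono fun x => hΦ.mul_le_mul_add_map hT (hg x)
    _ = T * (u * μ univ + ∫⁻ x, Φ (g x) ∂μ) := by
      rw [lintegral_const_mul' _ _ hT_top, lintegral_add_left measurable_const, lintegral_const]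
    _ ≤ T * (u * 1 + u) := by gcongr; exact prob_le_one
    _ = u * (2 * T) := by ring

lemma lintegral_le_two_mul_ginv (hΦ : IsYoung Φ) (hu0 : u ≠ 0) (hu : u ≠ ⊤)
    (hg : ∀ x, g x ≠ ⊤) (hmean : ∫⁻ x, Φ (g x) ∂μ ≤ u) :
    ∫⁻ x, g x ∂μ ≤ 2 * ginv Φ u := by
  rw [ginv_of_ne_top hu, ← ENNReal.div_le_iff' two_ne_zero ENNReal.ofNat_ne_top]
  exact le_sInf fun T hT => ENNReal.div_le_of_le_mul'
    (hΦ.lintegral_le_two_mul_of_le_map hu0 hu hg hmean hT.le)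

lemma lintegral_le_two_mul_ginv_mul (hΦ : IsYoung Φ) (hu0 : u ≠ 0) (hu : u ≠ ⊤)
    (hg : ∀ x, g x ≠ ⊤) {lam : ℝ≥0∞} (hlam0 : lam ≠ 0) (hlam : lam ≠ ⊤)
    (hmean : ∫⁻ x, Φ (g x / lam) ∂μ ≤ u) :
    ∫⁻ x, g x ∂μ ≤ 2 * ginv Φ u * lam := by
  rw [← ENNReal.div_le_iff hlam0 hlam]
  calc (∫⁻ x, g x ∂μ) / lam
      = ∫⁻ x, g x / lam ∂μ := by
        simp only [div_eq_mul_inv, lintegral_mul_const' _ _ (ENNReal.inv_ne_top.2 hlam0)]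
    _ ≤ 2 * ginv Φ u :=
        hΦ.lintegral_le_two_mul_ginv hu0 hu (fun x => ENNReal.div_ne_top (hg x) hlam0) hmean

end IsYoung

end Young

/-- One-sided doubling with constant `C`: `φ` grows by at most the factor `C` when its argument at
most doubles. Unlike `DoublingOn`, it allows `φ` to decay arbitrarily fast. -/
def UpperDoublingWith (C : ℝ≥0) (φ : ℝ → ℝ) : Prop :=
  ∀ ⦃t R : ℝ⦄, 0 < t → t ≤ R → R ≤ 2 * t → φ R ≤ C * φ t

/-- The integral `∫_r^s Φ⁻¹(φ(t)) / t dt`, as an extended nonnegative number. -/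
def diniIntegral (Φ : ℝ≥0∞ → ℝ≥0∞) (φ : ℝ → ℝ) (r s : ℝ) : ℝ≥0∞ :=
  ∫⁻ t in Ioc r s, ginv Φ (ENNReal.ofReal (φ t)) / ENNReal.ofReal t

section Doubling

variable {Φ : ℝ≥0∞ → ℝ≥0∞} {φ : ℝ → ℝ} {C : ℝ≥0} {r s R : ℝ}

lemma DoublingOn.exists_upperDoublingWith (hφ : DoublingOn φ) (hφpos : ∀ r, 0 < r → 0 < φ r) :
    ∃ C, UpperDoublingWith C φ := by
  obtain ⟨C, hC, ratio_bounds⟩ := hφ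
  refine ⟨C.toNNReal, fun t R ht htR hRt => ?_⟩
  have ratio_le := (ratio_bounds R t (ht.trans_le htR) ht
    (by rw [le_div_iff₀ ht]; linarith) (by rwa [div_le_iff₀ ht])).1
  rwa [div_le_iff₀ (hφpos t ht), ← Real.coe_toNNReal C hC.le] at ratio_le

lemma UpperDoublingWith.one_le (hφ : UpperDoublingWith C φ) (hφpos : ∀ r, 0 < r → 0 < φ r) :
    1 ≤ C := by
  have le_self : φ 1 ≤ C * φ 1 := hφ one_pos le_rfl (by norm_num)
  exact_mod_cast (le_mul_iff_one_le_left (hφpos 1 one_pos)).1 le_self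

lemma diniIntegral_add (hrs : r ≤ s) (hsR : s ≤ R) :
    diniIntegral Φ φ r s + diniIntegral Φ φ s R = diniIntegral Φ φ r R := by
  unfold diniIntegral
  rw [← Ioc_union_Ioc_eq_Ioc hrs hsR,
    lintegral_union measurableSet_Ioc (Ioc_disjoint_Ioc_of_le le_rfl)]

lemma diniIntegral_mono_right (hsR : s ≤ R) : diniIntegral Φ φ r s ≤ diniIntegral Φ φ r R :=
  lintegral_mono_set (Ioc_subset_Ioc_right hsR)

lemma ginv_div_le_of_upperDoublingWith (hΦ : IsYoung Φ) (hφpos : ∀ r, 0 < r → 0 < φ r)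
    (hφ : UpperDoublingWith C φ) {t : ℝ} (ht : 0 < t) (htR : t ≤ R) (hRt : R ≤ 2 * t) :
    ginv Φ (ENNReal.ofReal (φ R)) / ENNReal.ofReal R ≤
      C * (ginv Φ (ENNReal.ofReal (φ t)) / ENNReal.ofReal t) := by
  have ofReal_le : ENNReal.ofReal (φ R) ≤ C * ENNReal.ofReal (φ t) := by
    rw [← ENNReal.ofReal_coe_nnreal, ← ENNReal.ofReal_mul C.coe_nonneg]
    exact ENNReal.ofReal_le_ofReal (hφ ht htR hRt)
  rw [← mul_div_assoc]
  gcongr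
  exact hΦ.ginv_le_mul_ginv (hφ.one_le hφpos) ENNReal.ofReal_ne_top ofReal_le

lemma ginv_le_mul_diniIntegral (hΦ : IsYoung Φ) (hφpos : ∀ r, 0 < r → 0 < φ r)
    (hφ : UpperDoublingWith C φ) (hR : 0 < R) :
    ginv Φ (ENNReal.ofReal (φ (2 * R))) ≤ 2 * C * diniIntegral Φ φ R (2 * R) := by
  set w := ginv Φ (ENNReal.ofReal (φ (2 * R)))
  have hR0 : ENNReal.ofReal (2 * R) ≠ 0 := by simpa using hR
  calc w = w / ENNReal.ofReal (2 * R) * ENNReal.ofReal (2 * R) :=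
        (ENNReal.div_mul_cancel hR0 ENNReal.ofReal_ne_top).symm
    _ = 2 * (w / ENNReal.ofReal (2 * R) * ENNReal.ofReal R) := by
        rw [ENNReal.ofReal_mul zero_le_two, ENNReal.ofReal_ofNat]; ring
    _ = 2 * ∫⁻ _ in Ioc R (2 * R), w / ENNReal.ofReal (2 * R) := by
        rw [setLIntegral_const, Real.volume_Ioc, two_mul R, add_sub_cancel_right]
    _ ≤ 2 * ∫⁻ t in Ioc R (2 * R),
          C * (ginv Φ (ENNReal.ofReal (φ t)) / ENNReal.ofReal t) := by
        gcongr 2 * ?_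
        refine setLIntegral_mono' measurableSet_Ioc fun t ht => ?_
        exact ginv_div_le_of_upperDoublingWith hΦ hφpos hφ (hR.trans ht.1) ht.2
          (by linarith [ht.1])
    _ = 2 * C * diniIntegral Φ φ R (2 * R) := by
        rw [lintegral_const_mul' _ _ ENNReal.coe_ne_top, mul_assoc]; rfl

end Doubling

section Campanato

variable {Φ : ℝ≥0∞ → ℝ≥0∞} {φ : ℝ → ℝ} {f g : EuclideanSpace ℝ (Fin n) → ℝ}
  {a b : EuclideanSpace ℝ (Fin n)} {r s R : ℝ} {C : ℝ≥0}

lemma ballNorm_eq_sInf_setLAverage (hφr : 0 < φ r) :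
    ballNorm Φ φ g a r =
      sInf {lam | 0 < lam ∧ ⨍⁻ x in ball a r, Φ (‖g x‖ₑ / lam) ∂volume ≤ ENNReal.ofReal (φ r)} := by
  simp only [ballNorm, setLAverage_eq, ENNReal.div_eq_inv_mul, Real.enorm_eq_ofReal_abs,
    ENNReal.inv_mul_le_iff (ENNReal.ofReal_pos.2 hφr).ne' ENNReal.ofReal_ne_top, mul_one]

lemma setLAverage_enorm_le_ballNorm (hΦ : IsYoung Φ) (hφr : 0 < φ r)
    (hg : ballNorm Φ φ g a r ≠ ⊤) :
    ⨍⁻ x in ball a r, ‖g x‖ₑ ∂volume ≤ 2 * ginv Φ (ENNReal.ofReal (φ r)) * ballNorm Φ φ g a r := by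
  have hc : 2 * ginv Φ (ENNReal.ofReal (φ r)) ≠ ⊤ :=
    ENNReal.mul_ne_top ENNReal.ofNat_ne_top (hΦ.ginv_ne_top ENNReal.ofReal_ne_top)
  refine ENNReal.le_mul_of_forall_lt (.inr hg) (.inl hc) fun c' hc' N' hN' => ?_
  rw [ballNorm_eq_sInf_setLAverage hφr] at hN'
  obtain ⟨lam, ⟨hlam0, hmean⟩, hlamN⟩ := sInf_lt_iff.1 hN'
  calc ⨍⁻ x in ball a r, ‖g x‖ₑ ∂volume
      ≤ 2 * ginv Φ (ENNReal.ofReal (φ r)) * lam :=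
        hΦ.lintegral_le_two_mul_ginv_mul (ENNReal.ofReal_pos.2 hφr).ne' ENNReal.ofReal_ne_top
          (fun _ => enorm_ne_top) hlam0.ne' hlamN.ne_top hmean
    _ ≤ c' * N' := by gcongr

lemma ballNorm_sub_average_le_campNorm (hr : 0 < r) :
    ballNorm Φ φ (fun x => f x - ⨍ y in ball a r, f y) a r ≤ campNorm Φ φ f :=
  le_iSup₂_of_le a r (le_iSup_of_le hr le_rfl)

lemma setLAverage_edist_average_le_campNorm (hΦ : IsYoung Φ) (hφr : 0 < φ r)
    (hN : campNorm Φ φ f ≠ ⊤) (hr : 0 < r) :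
    ⨍⁻ x in ball a r, edist (f x) (⨍ y in ball a r, f y) ∂volume ≤
      2 * ginv Φ (ENNReal.ofReal (φ r)) * campNorm Φ φ f := by
  have ballNorm_le := ballNorm_sub_average_le_campNorm (Φ := Φ) (φ := φ) (f := f) (a := a) hr
  simp only [edist_eq_enorm_sub]
  exact (setLAverage_enorm_le_ballNorm hΦ hφr (ne_top_of_le_ne_top hN ballNorm_le)).trans
    (mul_le_mul_right ballNorm_le _)

lemma edist_average_ball_le_ginv (hΦ : IsYoung Φ) (hφs : 0 < φ s)
    (hf : LocallyIntegrable f volume) (hN : campNorm Φ φ f ≠ ⊤) (hr : 0 < r)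
    (hsub : ball a r ⊆ ball b s) {k : ℝ≥0} (hk : s ≤ k * r) :
    edist (⨍ y in ball a r, f y) (⨍ y in ball b s, f y) ≤
      k ^ n * (2 * ginv Φ (ENNReal.ofReal (φ s)) * campNorm Φ φ f) := by
  have hs : 0 < s := pos_of_mem_ball (hsub (mem_ball_self hr))
  have hk0 : 0 < k := NNReal.coe_pos.1 (pos_of_mul_pos_left (hs.trans_le hk) hr.le)
  have : IsFiniteMeasure (volume.restrict (ball a r)) :=
    isFiniteMeasure_restrict.2 measure_ball_lt_top.ne
  have : NeZero (volume.restrict (ball a r)) :=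
    ⟨by simpa using (measure_ball_pos volume a hr).ne'⟩
  have volume_le : volume (ball b s) ≤ k ^ n * volume (ball a r) := by
    simpa using addHaar_ball_le_pow_mul volume a b hk0 hk
  have integrableOn_ball : IntegrableOn f (ball a r) :=
    (hf.integrableOn_isCompact (isCompact_closedBall a r)).mono_set ball_subset_closedBall
  calc edist (⨍ y in ball a r, f y) (⨍ y in ball b s, f y)
      ≤ ⨍⁻ x in ball a r, edist (f x) (⨍ y in ball b s, f y) ∂volume :=
        edist_average_le_laverage integrableOn_ball _
    _ ≤ k ^ n * ⨍⁻ x in ball b s, edist (f x) (⨍ y in ball b s, f y) ∂volume :=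
        setLAverage_le_mul_setLAverage_of_subset measure_ball_lt_top.ne hsub
          volume_le _
    _ ≤ k ^ n * (2 * ginv Φ (ENNReal.ofReal (φ s)) * campNorm Φ φ f) := by
        gcongr
        exact setLAverage_edist_average_le_campNorm hΦ hφs hN hs

lemma edist_average_ball_le_diniIntegral (hΦ : IsYoung Φ) (hφpos : ∀ r, 0 < r → 0 < φ r)
    (hφ : UpperDoublingWith C φ) (hf : LocallyIntegrable f volume) (hN : campNorm Φ φ f ≠ ⊤)
    (hR : 0 < R) (hRr : R ≤ 2 * r) (hsub : ball a r ⊆ ball b (2 * R)) :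
    edist (⨍ y in ball a r, f y) (⨍ y in ball b (2 * R), f y) ≤
      4 ^ (n + 1) * C * diniIntegral Φ φ R (2 * R) * campNorm Φ φ f := by
  have hr : 0 < r := by linarith
  calc edist (⨍ y in ball a r, f y) (⨍ y in ball b (2 * R), f y)
      ≤ (4 : ℝ≥0) ^ n * (2 * ginv Φ (ENNReal.ofReal (φ (2 * R))) * campNorm Φ φ f) :=
        edist_average_ball_le_ginv hΦ (hφpos _ (by positivity)) hf hN hr hsub
          (by push_cast; linarith)
    _ ≤ (4 : ℝ≥0) ^ n * (2 * (2 * C * diniIntegral Φ φ R (2 * R)) * campNorm Φ φ f) := by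
        gcongr
        exact ginv_le_mul_diniIntegral hΦ hφpos hφ hR
    _ = 4 ^ (n + 1) * C * diniIntegral Φ φ R (2 * R) * campNorm Φ φ f := by push_cast; ring

lemma edist_average_ball_two_pow_mul_le (hΦ : IsYoung Φ) (hφpos : ∀ r, 0 < r → 0 < φ r)
    (hφ : UpperDoublingWith C φ) (hf : LocallyIntegrable f volume) (hN : campNorm Φ φ f ≠ ⊤)
    (hr : 0 < r) (m : ℕ) :
    edist (⨍ y in ball a r, f y) (⨍ y in ball a (2 ^ m * r), f y) ≤
      4 ^ (n + 1) * C * diniIntegral Φ φ r (2 ^ m * r) * campNorm Φ φ f := by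
  induction m with
  | zero => simp
  | succ m ih =>
    set R := 2 ^ m * r with hR
    have hrR : r ≤ R := le_mul_of_one_le_left hr.le (one_le_pow₀ one_le_two)
    have doubling_step := edist_average_ball_le_diniIntegral hΦ hφpos hφ hf hN
      (a := a) (b := a) (r := R) (R := R) (by linarith) (by linarith)
      (ball_subset_ball (by linarith))
    rw [pow_succ', mul_assoc, ← hR, ← diniIntegral_add hrR (by linarith), mul_add, add_mul]
    exact (edist_triangle _ _ _).trans (add_le_add ih doubling_step)

lemma edist_average_ball_le_of_dist_le (hΦ : IsYoung Φ) (hφpos : ∀ r, 0 < r → 0 < φ r)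
    (hφ : UpperDoublingWith C φ) (hf : LocallyIntegrable f volume) (hN : campNorm Φ φ f ≠ ⊤)
    (hr : 0 < r) (hrs : r ≤ s) (hab : dist a b ≤ s) :
    edist (⨍ y in ball a r, f y) (⨍ y in ball b s, f y) ≤
      2 * (4 ^ (n + 1) * C) * diniIntegral Φ φ r (2 * s) * campNorm Φ φ f := by
  have hs : 0 < s := hr.trans_le hrs
  obtain ⟨m, hm_le, hm_lt⟩ := exists_nat_pow_near ((one_le_div hr).2 hrs) one_lt_two
  rw [le_div_iff₀ hr] at hm_le
  rw [div_lt_iff₀ hr, pow_succ', mul_assoc] at hm_lt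
  set ρ := 2 ^ m * r
  set K : ℝ≥0∞ := 4 ^ (n + 1) * C
  set N := campNorm Φ φ f
  let avg (x : EuclideanSpace ℝ (Fin n)) (t : ℝ) : ℝ := ⨍ y in ball x t, f y
  have enlarge : edist (avg a r) (avg a ρ) ≤ K * diniIntegral Φ φ r s * N :=
    (edist_average_ball_two_pow_mul_le hΦ hφpos hφ hf hN hr m).trans
      (by gcongr; exact diniIntegral_mono_right hm_le)
  have recenter : edist (avg a ρ) (avg b (2 * s)) ≤ K * diniIntegral Φ φ s (2 * s) * N :=
    edist_average_ball_le_diniIntegral hΦ hφpos hφ hf hN hs hm_lt.le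
      (ball_subset_ball' (by linarith))
  have shrink : edist (avg b (2 * s)) (avg b s) ≤ K * diniIntegral Φ φ s (2 * s) * N := by
    rw [edist_comm]
    exact edist_average_ball_le_diniIntegral hΦ hφpos hφ hf hN hs (by linarith)
      (ball_subset_ball (by linarith))
  calc edist (avg a r) (avg b s)
      ≤ edist (avg a r) (avg a ρ) + edist (avg a ρ) (avg b (2 * s)) +
          edist (avg b (2 * s)) (avg b s) := edist_triangle4 _ _ _ _
    _ ≤ K * diniIntegral Φ φ r s * N + K * diniIntegral Φ φ s (2 * s) * N +
          K * diniIntegral Φ φ s (2 * s) * N := by gcongr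
    _ ≤ K * diniIntegral Φ φ r s * N + K * diniIntegral Φ φ s (2 * s) * N +
          K * diniIntegral Φ φ s (2 * s) * N + K * diniIntegral Φ φ r s * N := le_self_add
    _ = 2 * K * (diniIntegral Φ φ r s + diniIntegral Φ φ s (2 * s)) * N := by ring
    _ = 2 * K * diniIntegral Φ φ r (2 * s) * N := by
        rw [diniIntegral_add hrs (by linarith)]

end Campanato

theorem stmt11_general {n : ℕ} (Φ : ℝ≥0∞ → ℝ≥0∞) (hΦ : IsYoung Φ) (φ : ℝ → ℝ)
    (hφpos : ∀ r : ℝ, 0 < r → 0 < φ r) (hφ : ∃ C, UpperDoublingWith C φ) :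
    ∃ C : ℝ≥0∞, 0 < C ∧ C ≠ ⊤ ∧
    ∀ (f : EuclideanSpace ℝ (Fin n) → ℝ), LocallyIntegrable f volume →
      campNorm Φ φ f < ⊤ →
    ∀ (a b : EuclideanSpace ℝ (Fin n)) (r s : ℝ), 0 < r → 0 < s →
      ball a r ⊆ ball b s →
      ENNReal.ofReal |(⨍ y in ball a r, f y) - ⨍ y in ball b s, f y| ≤
        C * (∫⁻ t in Set.Ioc r (2 * s), ginv Φ (ENNReal.ofReal (φ t)) / ENNReal.ofReal t) *
          campNorm Φ φ f := by
  obtain ⟨C, hC⟩ := hφ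
  have hC0 : 0 < C := one_pos.trans_le (hC.one_le hφpos)
  refine ⟨2 * (4 ^ (n + 1) * C), by positivity, by finiteness, ?_⟩
  intro f hf hN a b r s hr hs hsub
  rw [← Real.dist_eq, ← edist_dist]
  -- Only in dimension zero can an inclusion of balls fail to give `r ≤ s`.
  rcases subsingleton_or_nontrivial (EuclideanSpace ℝ (Fin n)) with _ | _
  · have ball_eq : ball a r = ball b s :=
      (Subsingleton.eq_univ_of_nonempty (nonempty_ball.2 hr)).trans
        (Subsingleton.eq_univ_of_nonempty (nonempty_ball.2 hs)).symm
    simp [ball_eq]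
  · exact edist_average_ball_le_of_dist_le hΦ hφpos hC hf hN.ne hr
      (le_of_ball_subset_ball hr hsub) (hsub (mem_ball_self hr)).le

/-- for a doubling `φ`, there is `C > 0` such that for every
`f ∈ 𝓛^{(Φ,φ)}` and nested balls `B(a,r) ⊆ B(b,s)`,
`|f_{B(a,r)} − f_{B(b,s)}| ≤ C (∫_r^{2s} Φ⁻¹(φ(t))/t dt) ‖f‖_{𝓛^{(Φ,φ)}}`. -/
theorem stmt11 {n : ℕ} (Φ : ℝ≥0∞ → ℝ≥0∞) (hY : IsYoung Φ) (φ : ℝ → ℝ)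
    (hφpos : ∀ r : ℝ, 0 < r → 0 < φ r) (hφdb : DoublingOn φ) :
    ∃ C : ℝ≥0∞, 0 < C ∧ C ≠ ⊤ ∧
    ∀ (f : EuclideanSpace ℝ (Fin n) → ℝ), LocallyIntegrable f volume →
      campNorm Φ φ f < ⊤ →
    ∀ (a b : EuclideanSpace ℝ (Fin n)) (r s : ℝ), 0 < r → 0 < s →
      ball a r ⊆ ball b s →
      ENNReal.ofReal |(⨍ y in ball a r, f y) - ⨍ y in ball b s, f y| ≤
        C * (∫⁻ t in Set.Ioc r (2 * s), ginv Φ (ENNReal.ofReal (φ t)) / ENNReal.ofReal t) *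
          campNorm Φ φ f := by
  exact stmt11_general Φ hY φ hφpos (hφdb.exists_upperDoublingWith hφpos)
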